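/- Let 𝒯 = {t_1, …, t_k} be a finite set of types, τ : 𝒮 → 𝒯, and for S ⊆ 𝒮 let n(S) ∈ ℕ^k be the type-count vector with n_i(S) = |{s ∈ S : τ(s) = t_i}|. Let f : ℕ^k → ℝ be a diversity index satisfying q-ordinal concavity: for all ξ, ξ̃ ∈ ℕ^k with Σ_{l=1}^k ξ_l = Σ_{l=1}^k ξ̃_l = q and every index i with ξ_i > ξ̃_i, there exists an index j with ξ_j < ξ̃_j such that at least one of the following holds: (i) f(ξ − χ_i + χ_j) > f(ξ); (ii) f(ξ̃ + χ_i − χ_j) > f(ξ̃); or (iii) f(ξ̃ + χ_i − χ_j) = f(ξ̃) and f(ξ − χ_i + χ_j) = f(ξ), where χ_i denotes the i-th standard basis vector of ℕ^k. Define the distributional preference by S ≿ S' iff f(n(S)) ≥ f(n(S')). Then ≿ satisfies the upper-bound property, the maximizer property, and the improvement property. -/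

import Mathlib

open Finset

variable {α : Type*}

/-- Strict part of a distributional preference. -/
def strictPref (pref : Finset α → Finset α → Prop) (A B : Finset α) : Prop :=
  pref A B ∧ ¬ pref B A

/-- Indifference part of a distributional preference. -/
def indiffPref (pref : Finset α → Finset α → Prop) (A B : Finset α) : Prop :=
  pref A B ∧ pref B A

/-- Incomparability under a distributional preference. -/
def incomparable (pref : Finset α → Finset α → Prop) (A B : Finset α) : Prop :=
  ¬ pref A B ∧ ¬ pref B A

/-- `NW q S` is the collection of non-wasteful subsets of `S`. -/
def NW (q : ℕ) (S : Finset α) : Set (Finset α) :=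
  {T | T ⊆ S ∧ T.card = min q S.card}

/-- The frontier of `S`: non-wasteful subsets undominated w.r.t. the preference. -/
def frontierSet (pref : Finset α → Finset α → Prop) (q : ℕ) (S : Finset α) :
    Set (Finset α) :=
  {T | T ∈ NW q S ∧ ∀ T' ∈ NW q S, ¬ strictPref pref T' T}

/-- The upper-bound property of a distributional preference. -/
def upperBoundProperty [DecidableEq α] (pref : Finset α → Finset α → Prop) (q : ℕ) : Prop :=
  ∀ S S' : Finset α, S.card = q → S'.card = q → incomparable pref S S' →
    ∃ S'' ∈ NW q (S ∪ S'), strictPref pref S'' S ∨ strictPref pref S'' S'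

/-- The maximizer property of a distributional preference. -/
def maximizerProperty [DecidableEq α] (pref : Finset α → Finset α → Prop) (q : ℕ) : Prop :=
  ∀ S S' : Finset α, S ≠ S' → S.card = q → S'.card = q →
    (∀ S'' ∈ NW q (S ∪ S'), pref S S'' ∧ pref S' S'') →
    ∃ s ∈ S \ S', ∃ s' ∈ S' \ S,
      indiffPref pref (S.erase s ∪ {s'}) S ∧ indiffPref pref (S'.erase s' ∪ {s}) S'

/-- The improvement property of a distributional preference. -/
def improvementProperty [DecidableEq α] (pref : Finset α → Finset α → Prop) (q : ℕ) : Prop :=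
  ∀ S S' : Finset α, S.card = q → S'.card = q → ∀ s ∈ S \ S',
    (∀ S'' ∈ NW q (S ∪ S'), s ∉ S'' → strictPref pref S S'') →
    (∀ S'' ∈ NW q (S ∪ S'), s ∈ S'' → pref S S'') →
    ∃ s' ∈ S' \ S, strictPref pref (S'.erase s' ∪ {s}) S'

/-- A choice rule is non-wasteful. -/
def nonWasteful (q : ℕ) (Ch : Finset α → Finset α) : Prop :=
  ∀ S : Finset α, (Ch S).card = min q S.card

/-- A choice rule promotes the distributional preference. -/
def promotesPref (pref : Finset α → Finset α → Prop) (Ch : Finset α → Finset α) : Prop :=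
  ∀ S : Finset α, ∀ S' ⊆ S, S'.card = (Ch S).card → ¬ strictPref pref S' (Ch S)

/-- A choice rule guarantees no justified envy with respect to priority ranking `π`. -/
def noJustifiedEnvy [DecidableEq α] (pref : Finset α → Finset α → Prop)
    (π : α → α → Prop) (Ch : Finset α → Finset α) : Prop :=
  ∀ S : Finset α, ∀ s ∈ Ch S, ∀ s' ∈ S \ Ch S,
    pref ((Ch S).erase s ∪ {s'}) (Ch S) → π s s'

/-- Path independence of a choice rule. -/
def pathIndependent [DecidableEq α] (Ch : Finset α → Finset α) : Prop :=
  ∀ S S' : Finset α, Ch (S ∪ S') = Ch (Ch S ∪ S')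

/-- Consistency of a choice rule. -/
def consistentRule [DecidableEq α] (Ch : Finset α → Finset α) : Prop :=
  ∀ S : Finset α, ∀ s ∈ S, s ∉ Ch S → Ch (S.erase s) = Ch S

/-- Substitutability of a choice rule. -/
def substitutableRule [DecidableEq α] (Ch : Finset α → Finset α) : Prop :=
  ∀ S : Finset α, ∀ s ∈ S, ∀ s' ∈ S, s ≠ s' → s ∈ Ch S → s ∈ Ch (S.erase s')

/-- `l` lists the elements of `A` in strictly decreasing `π`-priority. -/
def descList [DecidableEq α] (π : α → α → Prop) (A : Finset α) (l : List α) : Prop :=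
  l.Pairwise π ∧ l.Nodup ∧ l.toFinset = A

/-- `A` priority dominates `B` with respect to `π`. -/
def priorityDominates [DecidableEq α] (π : α → α → Prop) (A B : Finset α) : Prop :=
  B.card ≤ A.card ∧
  ∀ la lb : List α, descList π A la → descList π B lb →
    ∀ (k : ℕ) (ha : k < la.length) (hb : k < lb.length),
      la.get ⟨k, ha⟩ = lb.get ⟨k, hb⟩ ∨ π (la.get ⟨k, ha⟩) (lb.get ⟨k, hb⟩)

/-- The revealed preference axiom for a choice rule: no revealed-priority cycles. -/
def revealedPrefAxiom [DecidableEq α] (pref : Finset α → Finset α → Prop)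
    (Ch : Finset α → Finset α) : Prop :=
  ¬ ∃ (K : ℕ) (s : ℕ → α) (T : ℕ → Finset α), 0 < K ∧ s K = s 0 ∧
    ∀ k < K, s k ∈ Ch (T k) ∧ s (k + 1) ∈ T k \ Ch (T k) ∧
      pref ((Ch (T k)).erase (s k) ∪ {s (k + 1)}) (Ch (T k))

/-- `moveVec k ξ i j = ξ − χ_i + χ_j`, where `χ_i` is the `i`-th standard basis
vector of `ℕ^k`. -/
def moveVec (k : ℕ) (ξ : Fin k → ℕ) (i j : Fin k) : Fin k → ℕ :=
  fun l => ξ l - (if l = i then 1 else 0) + (if l = j then 1 else 0)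

/-- `q`-ordinal concavity of a diversity index `f : ℕ^k → ℝ`. -/
def qOrdinalConcave (k q : ℕ) (f : (Fin k → ℕ) → ℝ) : Prop :=
  ∀ ξ ξ' : Fin k → ℕ, (∑ l, ξ l) = q → (∑ l, ξ' l) = q →
    ∀ i : Fin k, ξ' i < ξ i →
      ∃ j : Fin k, ξ j < ξ' j ∧
        (f ξ < f (moveVec k ξ i j) ∨
         f ξ' < f (moveVec k ξ' j i) ∨
         (f (moveVec k ξ' j i) = f ξ' ∧ f (moveVec k ξ i j) = f ξ))

/-- The type-count vector of a set of students. -/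
def typeCount {α : Type*} (k : ℕ) [DecidableEq (Fin k)] (τ : α → Fin k)
    (S : Finset α) : Fin k → ℕ :=
  fun i => (S.filter fun s => τ s = i).card

/-! Ordinal concavity on type-count vectors lifts to an exchange property between sets of
students: given `s ∈ S \ S'`, if `S` has more students of type `τ s` than `S'`, then concavity
supplies the type of a student to exchange `s` for; otherwise `S' \ S` contains a student of the
type of `s`, and swapping the two changes no type count. All swapped sets are non-wasteful subsets
of `S ∪ S'`, so the hypotheses of the maximizer and improvement properties leave only the desired
alternative of the exchange property. The upper-bound property holds because a preference given by
a real-valued index leaves no two sets incomparable. -/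

section Preference

/-- Ordinal exchange property on sets of `q` students, the analogue of `qOrdinalConcave` for
preferences over sets: any student of `S \ S'` can be exchanged for one of `S' \ S` so that one of
the two swaps is an improvement or both are neutral. The preference is an arbitrary relation. -/
def ordinalExchangeProperty [DecidableEq α] (pref : Finset α → Finset α → Prop) (q : ℕ) : Prop :=
  ∀ S S' : Finset α, S.card = q → S'.card = q → ∀ s ∈ S \ S', ∃ s' ∈ S' \ S,
    strictPref pref (S.erase s ∪ {s'}) S ∨
    strictPref pref (S'.erase s' ∪ {s}) S' ∨
    (indiffPref pref (S.erase s ∪ {s'}) S ∧ indiffPref pref (S'.erase s' ∪ {s}) S')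

variable {β : Type*} {pref : Finset α → Finset α → Prop} {q : ℕ} {S S' : Finset α} {s s' : α}

theorem strictPref_ge_iff_lt [Preorder β] (u : Finset α → β) {A B : Finset α} :
    strictPref (fun A B ↦ u B ≤ u A) A B ↔ u B < u A :=
  lt_iff_le_not_ge.symm

theorem indiffPref_ge_iff_eq [PartialOrder β] (u : Finset α → β) {A B : Finset α} :
    indiffPref (fun A B ↦ u B ≤ u A) A B ↔ u A = u B :=
  and_comm.trans antisymm_iff

variable [DecidableEq α]

theorem erase_union_singleton_mem_NW (hS : S.card = q) (hs : s ∈ S) (hs' : s' ∈ S' \ S) :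
    S.erase s ∪ {s'} ∈ NW q (S ∪ S') := by
  obtain ⟨hs'S', hs'S⟩ := mem_sdiff.1 hs'
  refine ⟨union_subset_union (erase_subset s S) (singleton_subset_iff.2 hs'S'), ?_⟩
  rw [union_singleton, card_insert_of_notMem fun h ↦ hs'S (mem_of_mem_erase h),
    card_erase_add_one hs, hS, min_eq_left (hS ▸ card_le_card subset_union_left)]

theorem upperBoundProperty_of_total (htotal : ∀ A B, pref A B ∨ pref B A) (q : ℕ) :
    upperBoundProperty pref q :=
  fun S S' _ _ hincomp ↦ absurd (htotal S S') (not_or.2 hincomp)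

theorem maximizerProperty_of_ordinalExchangeProperty (hex : ordinalExchangeProperty pref q) :
    maximizerProperty pref q := by
  intro S S' hne hS hS' hmax
  obtain ⟨s, hs⟩ : (S \ S').Nonempty :=
    sdiff_nonempty.2 fun hsub ↦ hne (eq_of_subset_of_card_le hsub (hS'.trans hS.symm).le)
  obtain ⟨s', hs', hswap⟩ := hex S S' hS hS' s hs
  have hSmax : pref S (S.erase s ∪ {s'}) :=
    (hmax _ (erase_union_singleton_mem_NW hS (mem_sdiff.1 hs).1 hs')).1
  have hS'max : pref S' (S'.erase s' ∪ {s}) :=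
    (hmax _ (union_comm S' S ▸ erase_union_singleton_mem_NW hS' (mem_sdiff.1 hs').1 hs)).2
  rcases hswap with himp | himp | hindiff
  · exact absurd hSmax himp.2
  · exact absurd hS'max himp.2
  · exact ⟨s, hs, s', hs', hindiff⟩

theorem improvementProperty_of_ordinalExchangeProperty (hex : ordinalExchangeProperty pref q) :
    improvementProperty pref q := by
  intro S S' hS hS' s hs hstrict _
  obtain ⟨s', hs', hswap⟩ := hex S S' hS hS' s hs
  have hsS : s ∈ S := (mem_sdiff.1 hs).1
  have hs_notMem : s ∉ S.erase s ∪ {s'} := by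
    simpa using ne_of_mem_of_not_mem hsS (mem_sdiff.1 hs').2
  have hworse : strictPref pref S (S.erase s ∪ {s'}) :=
    hstrict _ (erase_union_singleton_mem_NW hS hsS hs') hs_notMem
  rcases hswap with himp | himp | hindiff
  · exact absurd himp.1 hworse.2
  · exact ⟨s', hs', himp⟩
  · exact absurd hindiff.1.1 hworse.2

end Preference

section TypeCount

variable {k : ℕ}

theorem moveVec_eq (ξ : Fin k → ℕ) (i j : Fin k) :
    moveVec k ξ i j = ξ - Pi.single i 1 + Pi.single j 1 := by
  funext l
  simp [moveVec, Pi.single_apply]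

theorem moveVec_self {ξ : Fin k → ℕ} {i : Fin k} (hi : 0 < ξ i) : moveVec k ξ i i = ξ := by
  rw [moveVec_eq, tsub_add_cancel_of_le (update_le_iff.2 ⟨hi, fun _ _ ↦ zero_le⟩)]

variable {S S' : Finset α} {s s' : α}

theorem sum_typeCount (τ : α → Fin k) (S : Finset α) : ∑ l, typeCount k τ S l = S.card :=
  (card_eq_sum_card_fiberwise fun s _ ↦ mem_coe.2 (mem_univ (τ s))).symm

theorem typeCount_pos (τ : α → Fin k) (hs : s ∈ S) : 0 < typeCount k τ S (τ s) :=
  card_pos.2 ⟨s, mem_filter.2 ⟨hs, rfl⟩⟩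

variable [DecidableEq α]

theorem typeCount_insert (τ : α → Fin k) (hs : s ∉ S) :
    typeCount k τ (insert s S) = typeCount k τ S + Pi.single (τ s) 1 := by
  funext l
  by_cases hl : τ s = l
  · subst hl
    simp [typeCount, filter_insert, hs]
  · simp [typeCount, filter_insert, hl, Ne.symm hl]

theorem typeCount_erase (τ : α → Fin k) (hs : s ∈ S) :
    typeCount k τ (S.erase s) = typeCount k τ S - Pi.single (τ s) 1 := by
  refine eq_tsub_of_add_eq ?_
  rw [← typeCount_insert τ (notMem_erase s S), insert_erase hs]

theorem typeCount_erase_union_singleton (τ : α → Fin k) (hs : s ∈ S) (hs' : s' ∉ S) :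
    typeCount k τ (S.erase s ∪ {s'}) = moveVec k (typeCount k τ S) (τ s) (τ s') := by
  rw [union_singleton, typeCount_insert τ fun h ↦ hs' (mem_of_mem_erase h), typeCount_erase τ hs,
    moveVec_eq]

theorem exists_mem_sdiff_of_typeCount_lt {τ : α → Fin k} {j : Fin k}
    (h : typeCount k τ S j < typeCount k τ S' j) : ∃ s' ∈ S' \ S, τ s' = j := by
  obtain ⟨s', hs', hs'_notMem⟩ := exists_mem_notMem_of_card_lt_card h
  obtain ⟨hs'S', hj⟩ := mem_filter.1 hs'
  exact ⟨s', mem_sdiff.2 ⟨hs'S', fun hs'S ↦ hs'_notMem (mem_filter.2 ⟨hs'S, hj⟩)⟩, hj⟩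

theorem exists_mem_sdiff_of_typeCount_le {τ : α → Fin k} (hs : s ∈ S \ S')
    (h : typeCount k τ S (τ s) ≤ typeCount k τ S' (τ s)) : ∃ s' ∈ S' \ S, τ s' = τ s := by
  obtain ⟨hsS, hsS'⟩ := mem_sdiff.1 hs
  have hlt : typeCount k τ (S.erase s) (τ s) < typeCount k τ S' (τ s) := by
    have hpos := typeCount_pos τ hsS
    rw [typeCount_erase τ hsS, Pi.sub_apply, Pi.single_eq_same]
    omega
  obtain ⟨s', hs', hτ⟩ := exists_mem_sdiff_of_typeCount_lt hlt
  obtain ⟨hs'S', hs'_notMem⟩ := mem_sdiff.1 hs'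
  have hne : s' ≠ s := ne_of_mem_of_not_mem hs'S' hsS'
  exact ⟨s', mem_sdiff.2 ⟨hs'S', fun hs'S ↦ hs'_notMem (mem_erase.2 ⟨hne, hs'S⟩)⟩, hτ⟩

theorem qOrdinalConcave.ordinalExchangeProperty {q : ℕ} {f : (Fin k → ℕ) → ℝ}
    (hf : qOrdinalConcave k q f) (τ : α → Fin k) :
    ordinalExchangeProperty (fun A B ↦ f (typeCount k τ B) ≤ f (typeCount k τ A)) q := by
  intro S S' hS hS' s hs
  obtain ⟨hsS, hsS'⟩ := mem_sdiff.1 hs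
  suffices hmove : ∃ s' ∈ S' \ S,
      f (typeCount k τ S) < f (moveVec k (typeCount k τ S) (τ s) (τ s')) ∨
      f (typeCount k τ S') < f (moveVec k (typeCount k τ S') (τ s') (τ s)) ∨
      (f (moveVec k (typeCount k τ S') (τ s') (τ s)) = f (typeCount k τ S') ∧
        f (moveVec k (typeCount k τ S) (τ s) (τ s')) = f (typeCount k τ S)) by
    obtain ⟨s', hs', hmove⟩ := hmove
    obtain ⟨hs'S', hs'S⟩ := mem_sdiff.1 hs'
    refine ⟨s', hs', ?_⟩
    simpa only [strictPref_ge_iff_lt (f <| typeCount k τ ·),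
      indiffPref_ge_iff_eq (f <| typeCount k τ ·), typeCount_erase_union_singleton τ hsS hs'S,
      typeCount_erase_union_singleton τ hs'S' hsS', and_comm] using hmove
  rcases le_or_gt (typeCount k τ S (τ s)) (typeCount k τ S' (τ s)) with hle | hgt
  · obtain ⟨s', hs', hτ⟩ := exists_mem_sdiff_of_typeCount_le hs hle
    refine ⟨s', hs', .inr (.inr ⟨?_, ?_⟩)⟩
    · rw [← hτ, moveVec_self (typeCount_pos τ (mem_sdiff.1 hs').1)]
    · rw [hτ, moveVec_self (typeCount_pos τ hsS)]
  · obtain ⟨j, hj, hmove⟩ :=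
      hf _ _ ((sum_typeCount τ S).trans hS) ((sum_typeCount τ S').trans hS') (τ s) hgt
    obtain ⟨s', hs', rfl⟩ := exists_mem_sdiff_of_typeCount_lt hj
    exact ⟨s', hs', hmove⟩

end TypeCount

theorem stmt17_general {α : Type*} [DecidableEq α] {q k : ℕ} (τ : α → Fin k)
    {f : (Fin k → ℕ) → ℝ} (hf : qOrdinalConcave k q f) :
    upperBoundProperty
      (fun A B : Finset α => f (typeCount k τ B) ≤ f (typeCount k τ A)) q ∧
    maximizerProperty
      (fun A B : Finset α => f (typeCount k τ B) ≤ f (typeCount k τ A)) q ∧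
    improvementProperty
      (fun A B : Finset α => f (typeCount k τ B) ≤ f (typeCount k τ A)) q :=
  have hex := hf.ordinalExchangeProperty τ
  ⟨upperBoundProperty_of_total (fun _ _ ↦ le_total _ _) q,
    maximizerProperty_of_ordinalExchangeProperty hex,
    improvementProperty_of_ordinalExchangeProperty hex⟩

/-- If the diversity index `f` satisfies `q`-ordinal concavity,
then the distributional preference comparing sets by `f` applied to their
type-count vectors satisfies the upper-bound, maximizer, and improvement
properties. -/
theorem stmt17 {α : Type*} [Fintype α] [Nonempty α] [DecidableEq α]
    (q : ℕ) (hq : 0 < q) (k : ℕ) (τ : α → Fin k) (f : (Fin k → ℕ) → ℝ)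
    (hf : qOrdinalConcave k q f) :
    upperBoundProperty
      (fun A B : Finset α => f (typeCount k τ B) ≤ f (typeCount k τ A)) q ∧
    maximizerProperty
      (fun A B : Finset α => f (typeCount k τ B) ≤ f (typeCount k τ A)) q ∧
    improvementProperty
      (fun A B : Finset α => f (typeCount k τ B) ≤ f (typeCount k τ A)) q :=
  stmt17_general τ hf
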